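/- Under the standing hypotheses, for all s ∈ I the invariants are given by the formulas: κ₁(s) = det(e(s), e'(s), r'(s)), τ₀(s) = det(e(s), e'(s), e''(s)), and τ₁(s) = ⟪σ'(s), e(s)⟫, where det denotes the 3×3 determinant of the matrix with the indicated columns. -/

import Mathlib

noncomputable section
open scoped RealInnerProductSpace

/-- Euclidean 3-space `ℝ³`. -/
abbrev E3 : Type := EuclideanSpace ℝ (Fin 3)

/-- The cross product on `E3`. -/
def cross (u v : E3) : E3 :=
  (WithLp.equiv 2 (Fin 3 → ℝ)).symm
    ![u 1 * v 2 - u 2 * v 1, u 2 * v 0 - u 0 * v 2, u 0 * v 1 - u 1 * v 0]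

/-- Determinant of the 3×3 matrix with columns `u`, `v`, `w`. -/
def det3 (u v w : E3) : ℝ :=
  Matrix.det !![u 0, v 0, w 0; u 1, v 1, w 1; u 2, v 2, w 2]

namespace Ruled

/-- The director curve `e = v₀`. -/
def e (v₀ : ℝ → E3) : ℝ → E3 := v₀

/-- The base curve `r = v₀ × v₁`. -/
def r (v₀ v₁ : ℝ → E3) : ℝ → E3 := fun s => cross (v₀ s) (v₁ s)

/-- The parametrization `F(s,t) = r(s) + t • e(s)` of the ruled surface. -/
def F (v₀ v₁ : ℝ → E3) (s t : ℝ) : E3 := r v₀ v₁ s + t • v₀ s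

/-- `n₀ = v₀'`. -/
def n₀ (v₀ : ℝ → E3) : ℝ → E3 := fun s => deriv v₀ s

/-- `κ₁ = ⟪v₀', v₁'⟫`, the ε-part of the dual curvature. -/
def κ₁ (v₀ v₁ : ℝ → E3) : ℝ → ℝ := fun s => ⟪deriv v₀ s, deriv v₁ s⟫

/-- `n₁ = v₁' - κ₁ • v₀'`. -/
def n₁ (v₀ v₁ : ℝ → E3) : ℝ → E3 := fun s => deriv v₁ s - κ₁ v₀ v₁ s • deriv v₀ s

/-- `t₀ = v₀ × n₀`. -/
def t₀ (v₀ : ℝ → E3) : ℝ → E3 := fun s => cross (v₀ s) (n₀ v₀ s)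

/-- `t₁ = v₀ × n₁ + v₁ × n₀`. -/
def t₁ (v₀ v₁ : ℝ → E3) : ℝ → E3 :=
  fun s => cross (v₀ s) (n₁ v₀ v₁ s) + cross (v₁ s) (n₀ v₀ s)

/-- `τ₀ = ⟪n₀', t₀⟫`, the real part of the dual torsion. -/
def τ₀ (v₀ : ℝ → E3) : ℝ → ℝ := fun s => ⟪deriv (n₀ v₀) s, t₀ v₀ s⟫

/-- `τ₁ = ⟪n₀', t₁⟫ + ⟪n₁', t₀⟫`, the ε-part of the dual torsion. -/
def τ₁ (v₀ v₁ : ℝ → E3) : ℝ → ℝ :=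
  fun s => ⟪deriv (n₀ v₀) s, t₁ v₀ v₁ s⟫ + ⟪deriv (n₁ v₀ v₁) s, t₀ v₀ s⟫

/-- The striction curve `σ(s) = r(s) - ⟪r'(s), e'(s)⟫ • e(s)`. -/
def strict (v₀ v₁ : ℝ → E3) : ℝ → E3 :=
  fun s => r v₀ v₁ s - ⟪deriv (r v₀ v₁) s, deriv (e v₀) s⟫ • e v₀ s

end Ruled

open Ruled

theorem aux_inner (u v : E3) : ⟪u, v⟫ = u 0 * v 0 + u 1 * v 1 + u 2 * v 2 := by
  simp [PiLp.inner_apply, Fin.sum_univ_three]; ring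

theorem aux_c0 (u v : E3) : cross u v 0 = u 1 * v 2 - u 2 * v 1 := rfl
theorem aux_c1 (u v : E3) : cross u v 1 = u 2 * v 0 - u 0 * v 2 := rfl
theorem aux_c2 (u v : E3) : cross u v 2 = u 0 * v 1 - u 1 * v 0 := rfl

theorem aux_det (u v w : E3) : det3 u v w = ⟪cross u v, w⟫ := by
  rw [aux_inner, aux_c0, aux_c1, aux_c2, det3, Matrix.det_fin_three]
  simp; ring

theorem aux_coord {f : ℝ → E3} {f' : E3} {s : ℝ} (h : HasDerivAt f f' s) (i : Fin 3) :
    HasDerivAt (fun x => f x i) (f' i) s :=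
  (EuclideanSpace.proj (𝕜 := ℝ) i : E3 →L[ℝ] ℝ).hasFDerivAt.comp_hasDerivAt s h

theorem aux_coord_mk {f : ℝ → E3} {f' : E3} {s : ℝ}
    (h : ∀ i, HasDerivAt (fun x => f x i) (f' i) s) : HasDerivAt f f' s := by
  have h1 : HasDerivAt (fun x => (WithLp.ofLp (f x))) (WithLp.ofLp f') s := hasDerivAt_pi.2 h
  exact ((EuclideanSpace.equiv (Fin 3) ℝ).symm.toContinuousLinearMap).hasFDerivAt.comp_hasDerivAt s h1

theorem aux_cross {f g : ℝ → E3} {f' g' : E3} {s : ℝ} (hf : HasDerivAt f f' s)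
    (hg : HasDerivAt g g' s) :
    HasDerivAt (fun x => cross (f x) (g x)) (cross f' (g s) + cross (f s) g') s := by
  have F := aux_coord hf
  have G := aux_coord hg
  apply aux_coord_mk
  intro i
  fin_cases i
  · refine (((F 1).mul (G 2)).sub ((F 2).mul (G 1))).congr_deriv ?_
    simp [aux_c0]; ring
  · refine (((F 2).mul (G 0)).sub ((F 0).mul (G 2))).congr_deriv ?_
    simp [aux_c1]; ring
  · refine (((F 0).mul (G 1)).sub ((F 1).mul (G 0))).congr_deriv ?_
    simp [aux_c2]; ring

/-- Gram identity: `det(x,y,z) det(a,p,a×p)` is the determinant of inner products. -/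
theorem aux_gram (a p x y z : E3) (h1 : ⟪a, a⟫ = 1) (h2 : ⟪a, p⟫ = 0) (h3 : ⟪p, p⟫ = 1) :
    ⟪cross x y, z⟫ =
      ⟪x, a⟫ * (⟪y, p⟫ * ⟪cross a p, z⟫ - ⟪cross a p, y⟫ * ⟪z, p⟫)
      - ⟪x, p⟫ * (⟪y, a⟫ * ⟪cross a p, z⟫ - ⟪cross a p, y⟫ * ⟪z, a⟫)
      + ⟪cross a p, x⟫ * (⟪y, a⟫ * ⟪z, p⟫ - ⟪y, p⟫ * ⟪z, a⟫) := by
  have key : ⟪cross x y, z⟫ * (⟪a, a⟫ * ⟪p, p⟫ - ⟪a, p⟫ ^ 2) =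
      ⟪x, a⟫ * (⟪y, p⟫ * ⟪cross a p, z⟫ - ⟪cross a p, y⟫ * ⟪z, p⟫)
      - ⟪x, p⟫ * (⟪y, a⟫ * ⟪cross a p, z⟫ - ⟪cross a p, y⟫ * ⟪z, a⟫)
      + ⟪cross a p, x⟫ * (⟪y, a⟫ * ⟪z, p⟫ - ⟪y, p⟫ * ⟪z, a⟫) := by
    simp only [aux_inner, aux_c0, aux_c1, aux_c2]; ring
  rw [h1, h2, h3] at key
  linarith

theorem aux_alg1 (a p b q : E3) (h1 : ⟪a, a⟫ = 1) (h2 : ⟪a, p⟫ = 0)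
    (h4 : ⟪a, b⟫ = 0) :
    ⟪p, q⟫ = ⟪cross a p, cross p b + cross a q⟫ := by
  have key : ⟪cross a p, cross p b + cross a q⟫ =
      ⟪a, p⟫ * ⟪p, b⟫ - ⟪a, b⟫ * ⟪p, p⟫ + ⟪a, a⟫ * ⟪p, q⟫ - ⟪a, q⟫ * ⟪a, p⟫ := by
    rw [inner_add_right]; simp only [aux_inner, aux_c0, aux_c1, aux_c2]; ring
  rw [key, h1, h2, h4]; ring

theorem aux_alg2 (a p w b q u : E3) (k' : ℝ) (h1 : ⟪a, a⟫ = 1) (h2 : ⟪a, p⟫ = 0)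
    (h3 : ⟪p, p⟫ = 1) (h4 : ⟪a, b⟫ = 0) (h5 : ⟪w, p⟫ = 0) (h6 : ⟪w, a⟫ = -1) :
    ⟪w, cross a (q - ⟪p, q⟫ • p) + cross b p⟫ + ⟪u - (⟪p, q⟫ • w + k' • p), cross a p⟫ =
      ⟪(cross p b + cross a q)
        - (⟪cross p b + cross a q, p⟫ • p
          + (⟪cross p b + cross a q, w⟫
             + ⟪(cross w b + cross p q) + (cross p q + cross a u), p⟫) • a), a⟫ := by
  have g1 := aux_gram a p a q w h1 h2 h3
  have g2 := aux_gram a p w b p h1 h2 h3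
  have g3 := aux_gram a p p b a h1 h2 h3
  have h2' : ⟪p, a⟫ = 0 := by rw [real_inner_comm]; exact h2
  have h4' : ⟪b, a⟫ = 0 := by rw [real_inner_comm]; exact h4
  have z1 : ⟪cross a p, a⟫ = 0 := by simp only [aux_inner, aux_c0, aux_c1, aux_c2]; ring
  have z2 : ⟪cross a p, p⟫ = 0 := by simp only [aux_inner, aux_c0, aux_c1, aux_c2]; ring
  rw [h1, h2, h5, h6, z1] at g1
  rw [h3, h5, h6, h2', h4', z2] at g2
  rw [h3, h1, h2', h2, h4', z1, z2] at g3
  have L : ⟪w, cross a (q - ⟪p, q⟫ • p) + cross b p⟫ + ⟪u - (⟪p, q⟫ • w + k' • p), cross a p⟫ =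
      ⟪cross a q, w⟫ - 2 * ⟪p, q⟫ * ⟪cross a p, w⟫ + ⟪cross w b, p⟫ + ⟪cross a p, u⟫ := by
    generalize ⟪p, q⟫ = k
    simp only [aux_inner, aux_c0, aux_c1, aux_c2, PiLp.add_apply, PiLp.sub_apply, PiLp.smul_apply,
      smul_eq_mul]; ring
  have R : ⟪(cross p b + cross a q)
        - (⟪cross p b + cross a q, p⟫ • p
          + (⟪cross p b + cross a q, w⟫
             + ⟪(cross w b + cross p q) + (cross p q + cross a u), p⟫) • a), a⟫ =
      ⟪cross p b, a⟫ - ⟪cross a q, w⟫ + ⟪cross a p, u⟫ := by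
    rw [inner_sub_left, inner_add_left (_ • p), inner_smul_left, inner_smul_left, h2', h1]
    simp only [aux_inner, aux_c0, aux_c1, aux_c2, PiLp.add_apply, conj_trivial]; ring
  rw [L, R]
  have hc : ⟪q, p⟫ = ⟪p, q⟫ := real_inner_comm _ _
  rw [hc] at g1
  rw [g1, g2, g3]; ring

/-- Formulas for the invariants: `κ₁ = det(e, e', r')`, `τ₀ = det(e, e', e'')`,
`τ₁ = ⟪σ', e⟫`. -/
theorem invariants_formulas
    (I : Set ℝ) (v₀ v₁ : ℝ → E3)
    (hI : IsOpen I) (hI' : I.OrdConnected)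
    (hv₀ : ContDiffOn ℝ (⊤ : ℕ∞) v₀ I) (hv₁ : ContDiffOn ℝ (⊤ : ℕ∞) v₁ I)
    (hunit : ∀ s ∈ I, ‖v₀ s‖ = 1) (horth : ∀ s ∈ I, ⟪v₀ s, v₁ s⟫ = 0)
    (harc : ∀ s ∈ I, ‖deriv v₀ s‖ = 1) :
    ∀ s ∈ I,
      κ₁ v₀ v₁ s = det3 (e v₀ s) (deriv (e v₀) s) (deriv (r v₀ v₁) s) ∧
      τ₀ v₀ s = det3 (e v₀ s) (deriv (e v₀) s) (deriv (deriv (e v₀)) s) ∧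
      τ₁ v₀ v₁ s = ⟪deriv (strict v₀ v₁) s, e v₀ s⟫ := by
  intro s hs
  have hd : ∀ (f : ℝ → E3), ContDiffOn ℝ (⊤ : ℕ∞) f I →
      (∀ x ∈ I, HasDerivAt f (deriv f x) x) ∧ ContDiffOn ℝ (⊤ : ℕ∞) (deriv f) I := by
    intro f hf
    refine ⟨fun x hx => ((hf.differentiableOn (by simp)).differentiableAt
      (hI.mem_nhds hx)).hasDerivAt, hf.deriv_of_isOpen hI (by simp)⟩
  obtain ⟨A, hA'⟩ := hd v₀ hv₀
  obtain ⟨P, -⟩ := hd _ hA'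
  obtain ⟨B, hB'⟩ := hd v₁ hv₁
  obtain ⟨Q, -⟩ := hd _ hB'
  have cst : ∀ (f g : ℝ → E3) (f' g' : E3) (x c : ℝ), x ∈ I → HasDerivAt f f' x →
      HasDerivAt g g' x → (∀ y ∈ I, ⟪f y, g y⟫ = c) → ⟪f x, g'⟫ + ⟪f', g x⟫ = 0 := by
    intro f g f' g' x c hx hf hg h
    have h1 := hf.inner ℝ hg
    have h2 : (fun t => ⟪f t, g t⟫) =ᶠ[nhds x] fun _ => c :=
      Filter.eventually_of_mem (hI.mem_nhds hx) h
    exact h1.unique ((hasDerivAt_const x c).congr_of_eventuallyEq h2)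
  have H1 : ∀ x ∈ I, ⟪v₀ x, v₀ x⟫ = (1 : ℝ) := fun x hx => by
    rw [real_inner_self_eq_norm_sq, hunit x hx]; norm_num
  have H3 : ∀ x ∈ I, ⟪deriv v₀ x, deriv v₀ x⟫ = (1 : ℝ) := fun x hx => by
    rw [real_inner_self_eq_norm_sq, harc x hx]; norm_num
  have H2 : ∀ x ∈ I, ⟪v₀ x, deriv v₀ x⟫ = (0 : ℝ) := fun x hx => by
    have := cst _ _ _ _ x 1 hx (A x hx) (A x hx) H1
    rw [real_inner_comm (v₀ x) (deriv v₀ x)] at this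
    linarith
  have H5 : ⟪deriv (deriv v₀) s, deriv v₀ s⟫ = (0 : ℝ) := by
    have := cst _ _ _ _ s 1 hs (P s hs) (P s hs) H3
    rw [real_inner_comm (deriv (deriv v₀) s) (deriv v₀ s)] at this
    linarith
  have H6 : ⟪deriv (deriv v₀) s, v₀ s⟫ = (-1 : ℝ) := by
    have := cst _ _ _ _ s 0 hs (A s hs) (P s hs) H2
    rw [H3 s hs] at this
    rw [real_inner_comm]
    linarith
  have Rd : ∀ x ∈ I, HasDerivAt (r v₀ v₁)
      (cross (deriv v₀ x) (v₁ x) + cross (v₀ x) (deriv v₁ x)) x :=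
    fun x hx => aux_cross (A x hx) (B x hx)
  refine ⟨?_, ?_, ?_⟩
  · rw [aux_det, (Rd s hs).deriv]
    exact aux_alg1 _ _ _ _ (H1 s hs) (H2 s hs) (horth s hs)
  · rw [aux_det, real_inner_comm]
    rfl
  · have hn1 : HasDerivAt (n₁ v₀ v₁) _ s :=
      (Q s hs).sub (((P s hs).inner ℝ (Q s hs)).smul (P s hs))
    have hR2 := (aux_cross (P s hs) (B s hs)).add (aux_cross (A s hs) (Q s hs))
    have hS := (Rd s hs).sub ((hR2.inner ℝ (P s hs)).smul (A s hs))
    have hsig := hS.congr_of_eventuallyEq (f₁ := strict v₀ v₁) (by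
      refine Filter.eventually_of_mem (hI.mem_nhds hs) fun x hx => ?_
      change r v₀ v₁ x - ⟪deriv (r v₀ v₁) x, deriv (e v₀) x⟫ • e v₀ x = _
      rw [(Rd x hx).deriv]
      rfl)
    rw [hsig.deriv]
    unfold τ₁
    rw [hn1.deriv]
    exact aux_alg2 _ _ _ _ _ _ _ (H1 s hs) (H2 s hs) (H3 s hs) (horth s hs) H5 H6
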